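/- (Flattening change of variables near the boundary.) Fix t ∈ ℝ. There exist h₀ > 0, u₀ > 0 and an infinitely differentiable function v : (−u₀, u₀) × (−h₀, h₀) → ℝ such that for all |h| < h₀ one has 1 + hκ(t) > 0 and v(0, h) = (1 + hκ(t))^{−1/2}, and for all |u| < u₀ and |h| < h₀, ‖γ(t) + h·n(t) − γ(t + u·v(u,h))‖² = h² + u². -/

import Mathlib

open Real Filter Topology MeasureTheory

noncomputable section

/-- Euclidean dot product on `ℝ × ℝ`. -/
def dot2 (v w : ℝ × ℝ) : ℝ := v.1 * w.1 + v.2 * w.2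

/-- Unit tangent vector `τ(s) = γ′(s)`. -/
def tang (γ : ℝ → ℝ × ℝ) (s : ℝ) : ℝ × ℝ := deriv γ s

/-- Unit normal vector `n(s) = (τ₂(s), −τ₁(s))`. -/
def nor (γ : ℝ → ℝ × ℝ) (s : ℝ) : ℝ × ℝ := ((deriv γ s).2, -(deriv γ s).1)

/-- Signed curvature `κ(s) = −γ″(s)·n(s)`. -/
def curv (γ : ℝ → ℝ × ℝ) (s : ℝ) : ℝ := -(dot2 (deriv (deriv γ) s) (nor γ s))

/-- Smooth implicit function theorem with a smooth solution on a whole neighbourhood. -/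
theorem smooth_implicit {f : (ℝ × ℝ) × ℝ → ℝ} (hf : ContDiff ℝ (⊤ : ℕ∞) f) (u : (ℝ × ℝ) × ℝ)
    (hu : fderiv ℝ f u (0, 1) ≠ 0) :
    ∃ ψ : ℝ × ℝ → ℝ, ψ u.1 = u.2 ∧
      ∀ᶠ x in 𝓝 u.1, f (x, ψ x) = f u ∧ ContDiffAt ℝ (⊤ : ℕ∞) ψ x := by
  have hn : (((⊤ : ℕ∞) : WithTop ℕ∞)) ≠ 0 := by simp
  have key : ∀ w : (ℝ × ℝ) × ℝ, fderiv ℝ f w (0, 1) ≠ 0 →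
      (fderiv ℝ f w ∘L .inr ℝ (ℝ × ℝ) ℝ).IsInvertible := by
    intro w hw
    refine ⟨ContinuousLinearEquiv.unitsEquivAut ℝ (Units.mk0 _ hw), ?_⟩
    ext
    simp
  have cd : ∀ w, ContDiffAt ℝ (⊤ : ℕ∞) f w := fun w => hf.contDiffAt
  set ψ := (cd u).implicitFunction hn (key u hu) with hψ
  have h0 : ψ u.1 = u.2 := (cd u).implicitFunction_apply_self hn (key u hu)
  have hsm : ContDiffAt ℝ (⊤ : ℕ∞) ψ u.1 := (cd u).contDiffAt_implicitFunction hn (key u hu)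
  have heq : ∀ᶠ x in 𝓝 u.1, f (x, ψ x) = f u :=
    (cd u).eventually_apply_implicitFunction hn (key u hu)
  have hiff : ∀ᶠ v in 𝓝 u, f v = f u ↔ ψ v.1 = v.2 :=
    (cd u).eventually_apply_eq_iff_implicitFunction hn (key u hu)
  have hne : ∀ᶠ v in 𝓝 u, fderiv ℝ f v (0, 1) ≠ 0 := by
    have hc : Continuous (fun v => fderiv ℝ f v (0, 1)) :=
      (hf.continuous_fderiv hn).clm_apply continuous_const
    exact hc.continuousAt.eventually_ne hu
  have hgraph : Tendsto (fun x => (x, ψ x)) (𝓝 u.1) (𝓝 u) := by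
    have : Tendsto (fun x => (x, ψ x)) (𝓝 u.1) (𝓝 (u.1, ψ u.1)) :=
      (continuousAt_id.prodMk hsm.continuousAt)
    simpa [h0] using this
  refine ⟨ψ, h0, ?_⟩
  filter_upwards [heq, hgraph.eventually hiff.eventually_nhds, hgraph.eventually hne]
    with x hx1 hx2 hx3
  refine ⟨hx1, ?_⟩
  set w : (ℝ × ℝ) × ℝ := (x, ψ x) with hw
  have g0 := (cd w).implicitFunction_apply_self hn (key w hx3)
  have gsm := (cd w).contDiffAt_implicitFunction hn (key w hx3)
  have geq := (cd w).eventually_apply_implicitFunction hn (key w hx3)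
  set g := (cd w).implicitFunction hn (key w hx3) with hg
  have ggraph : Tendsto (fun x => (x, g x)) (𝓝 x) (𝓝 w) := by
    have : Tendsto (fun x => (x, g x)) (𝓝 x) (𝓝 (x, g x)) :=
      (continuousAt_id.prodMk gsm.continuousAt)
    have e : g x = ψ x := g0
    rw [e] at this
    exact this
  refine gsm.congr_of_eventuallyEq ?_
  have geq' : ∀ᶠ y in 𝓝 x, f (y, g y) = f w := geq
  change ∀ᶠ y in 𝓝 x, ψ y = g y
  filter_upwards [geq', ggraph.eventually hx2] with y hy1 hy2
  exact hy2.1 (hy1.trans hx1)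

theorem hasDerivAt_moment {f : ℝ → ℝ} (hf : ContDiff ℝ 1 f) (k : ℕ) (s : ℝ) :
    HasDerivAt (fun s => ∫ x in (0:ℝ)..1, x ^ k * f (s * x))
      (∫ x in (0:ℝ)..1, x ^ (k + 1) * deriv f (s * x)) s := by
  have hc : Continuous f := hf.continuous
  have hd : Continuous (deriv f) := hf.continuous_deriv le_rfl
  obtain ⟨C, hC⟩ := (isCompact_Icc (a := -(|s| + 1)) (b := |s| + 1)).exists_bound_of_continuousOn
    hd.continuousOn
  refine (intervalIntegral.hasDerivAt_integral_of_dominated_loc_of_deriv_le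
    (F := fun s x => x ^ k * f (s * x)) (F' := fun s x => x ^ (k + 1) * deriv f (s * x))
    (bound := fun _ => C) (Metric.ball_mem_nhds s one_pos) ?_ ?_ ?_ ?_ ?_ ?_).2
  · refine Eventually.of_forall fun y => Continuous.aestronglyMeasurable (by fun_prop)
  · exact Continuous.intervalIntegrable (by fun_prop) _ _
  · exact Continuous.aestronglyMeasurable (by fun_prop)
  · refine Eventually.of_forall fun x hx y hy => ?_
    rw [Set.uIoc_of_le zero_le_one] at hx
    have hy' : |y| ≤ |s| + 1 := by
      rw [Metric.mem_ball, Real.dist_eq] at hy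
      have := abs_sub_abs_le_abs_sub y s
      linarith
    have hyx : |y * x| ≤ |s| + 1 := by
      rw [abs_mul, abs_of_pos hx.1]
      have := abs_nonneg y
      nlinarith [hx.1, hx.2]
    have h1 := hC (y * x) (abs_le.1 hyx)
    rw [norm_mul]
    have h2 : ‖x ^ (k + 1)‖ ≤ 1 := by
      rw [Real.norm_eq_abs, abs_of_nonneg (pow_nonneg hx.1.le _)]
      exact pow_le_one₀ hx.1.le hx.2
    nlinarith [norm_nonneg (deriv f (y * x)), norm_nonneg (x ^ (k + 1))]
  · exact Continuous.intervalIntegrable (by fun_prop) _ _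
  · refine Eventually.of_forall fun x hx y hy => ?_
    have h1 : HasDerivAt f (deriv f (y * x)) (y * x) :=
      (hf.differentiable one_ne_zero _).hasDerivAt
    have h2 : HasDerivAt (fun y : ℝ => y * x) x y := by
      simpa using (hasDerivAt_id y).mul_const x
    have h3 := (h1.comp y h2).const_mul (x ^ k)
    convert! h3 using 1
    ring

theorem contDiff_moment (n : ℕ) : ∀ (f : ℝ → ℝ), ContDiff ℝ (⊤ : ℕ∞) f → ∀ k : ℕ,
    ContDiff ℝ n (fun s => ∫ x in (0:ℝ)..1, x ^ k * f (s * x)) := by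
  induction n with
  | zero =>
    intro f hf k
    refine contDiff_zero.2 (continuous_iff_continuousAt.2 fun s => ?_)
    exact (hasDerivAt_moment (hf.of_le (by exact_mod_cast le_top)) k s).continuousAt
  | succ n ih =>
    intro f hf k
    have hd := hasDerivAt_moment (hf.of_le (by exact_mod_cast le_top)) k
    have : ((n + 1 : ℕ) : WithTop ℕ∞) = (n : WithTop ℕ∞) + 1 := by push_cast; rfl
    rw [this, contDiff_succ_iff_deriv]
    refine ⟨fun s => (hd s).differentiableAt, by simp, ?_⟩
    have e : deriv (fun s => ∫ x in (0:ℝ)..1, x ^ k * f (s * x)) =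
        fun s => ∫ x in (0:ℝ)..1, x ^ (k + 1) * deriv f (s * x) := funext fun s => (hd s).deriv
    rw [e]
    exact ih _ (contDiff_infty_iff_deriv.1 hf).2 _

/-- The Hadamard lemma in one variable. -/
theorem hadamard {f : ℝ → ℝ} (hf : ContDiff ℝ (⊤ : ℕ∞) f) (h0 : f 0 = 0) :
    ∃ g : ℝ → ℝ, ContDiff ℝ (⊤ : ℕ∞) g ∧ (∀ s, f s = s * g s) := by
  refine ⟨fun s => ∫ x in (0:ℝ)..1, x ^ 0 * deriv f (s * x), ?_, fun s => ?_⟩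
  · exact contDiff_infty.2 fun n => contDiff_moment n _ (contDiff_infty_iff_deriv.1 hf).2 0
  · have hd : Continuous (deriv f) := (contDiff_infty_iff_deriv.1 hf).2.continuous
    have hdiff := (contDiff_infty_iff_deriv.1 hf).1
    have := intervalIntegral.integral_eq_sub_of_hasDerivAt (a := 0) (b := 1)
      (f := fun x => f (s * x)) (f' := fun x => s * deriv f (s * x)) (fun x _ => by
        have h1 : HasDerivAt f (deriv f (s * x)) (s * x) := (hdiff _).hasDerivAt
        have h2 : HasDerivAt (fun y : ℝ => s * y) s x := by
          simpa using (hasDerivAt_id x).const_mul s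
        have h3 := h1.comp x h2
        convert! h3 using 1
        ring) (Continuous.intervalIntegrable (by fun_prop) _ _)
    simp only [mul_one, mul_zero, h0, sub_zero, intervalIntegral.integral_const_mul] at this
    simp [← this]

theorem deriv_mul_id {f g : ℝ → ℝ} (hg : Differentiable ℝ g) (h : ∀ s, f s = s * g s) (s : ℝ) :
    HasDerivAt f (g s + s * deriv g s) s := by
  have h1 := (hasDerivAt_id s).mul (hg s).hasDerivAt
  have : f = id * g := funext h
  rw [this]
  simpa using h1

theorem stmt13 (L : ℝ) (hL : 0 < L) (γ : ℝ → ℝ × ℝ)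
    (hγ : ContDiff ℝ (⊤ : ℕ∞) γ)
    (hper : ∀ s, γ (s + L) = γ s)
    (hinj : Set.InjOn γ (Set.Ico 0 L))
    (harc : ∀ s, dot2 (deriv γ s) (deriv γ s) = 1)
    (t : ℝ) :
    ∃ h₀ > (0 : ℝ), ∃ u₀ > (0 : ℝ), ∃ v : ℝ × ℝ → ℝ,
      ContDiffOn ℝ (⊤ : ℕ∞) v (Set.Ioo (-u₀) u₀ ×ˢ Set.Ioo (-h₀) h₀) ∧
      (∀ h : ℝ, |h| < h₀ →
        0 < 1 + h * curv γ t ∧ v (0, h) = 1 / Real.sqrt (1 + h * curv γ t)) ∧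
      (∀ u h : ℝ, |u| < u₀ → |h| < h₀ →
        dot2 (γ t + h • nor γ t - γ (t + u * v (u, h)))
            (γ t + h • nor γ t - γ (t + u * v (u, h))) = h ^ 2 + u ^ 2) := by
  have hn : (((⊤ : ℕ∞) : WithTop ℕ∞)) ≠ 0 := by simp
  set κ := curv γ t with hκ
  set T := deriv γ t with hT
  have hγd : Differentiable ℝ γ := hγ.differentiable hn
  have hγ' : ContDiff ℝ (⊤ : ℕ∞) (deriv γ) := (contDiff_infty_iff_deriv.1 hγ).2
  have hγ'd : Differentiable ℝ (deriv γ) := hγ'.differentiable hn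
  have hTT : T.1 * T.1 + T.2 * T.2 = 1 := harc t
  -- components of the displacement
  have hs1 : ContDiff ℝ (⊤ : ℕ∞) (fun s => (γ (t + s)).1 - (γ t).1) := by fun_prop
  have hs2 : ContDiff ℝ (⊤ : ℕ∞) (fun s => (γ (t + s)).2 - (γ t).2) := by fun_prop
  have hshift : ∀ s, HasDerivAt (fun s => γ (t + s)) (deriv γ (t + s)) s := fun s =>
    (hγd (t + s)).hasDerivAt.comp_const_add t s
  have hshift' : ∀ s, HasDerivAt (fun s => deriv γ (t + s)) (deriv (deriv γ) (t + s)) s := fun s =>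
    (hγ'd (t + s)).hasDerivAt.comp_const_add t s
  obtain ⟨q1, hq1, e1⟩ := hadamard hs1 (by simp)
  obtain ⟨q2, hq2, e2⟩ := hadamard hs2 (by simp)
  have d1 : ∀ s, HasDerivAt (fun s => (γ (t + s)).1 - (γ t).1) (deriv γ (t + s)).1 s := fun s =>
    ((hasFDerivAt_fst.comp_hasDerivAt s (hshift s)).sub_const _)
  have d2 : ∀ s, HasDerivAt (fun s => (γ (t + s)).2 - (γ t).2) (deriv γ (t + s)).2 s := fun s =>
    ((hasFDerivAt_snd.comp_hasDerivAt s (hshift s)).sub_const _)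
  have dd1 := (hasFDerivAt_fst (𝕜 := ℝ)).comp_hasDerivAt (0:ℝ) (hshift' 0)
  have dd2 := (hasFDerivAt_snd (𝕜 := ℝ)).comp_hasDerivAt (0:ℝ) (hshift' 0)
  have q1d := hq1.differentiable hn
  have q2d := hq2.differentiable hn
  have f1 : ∀ s, (deriv γ (t + s)).1 = q1 s + s * deriv q1 s := fun s =>
    (d1 s).unique (deriv_mul_id q1d e1 s)
  have f2 : ∀ s, (deriv γ (t + s)).2 = q2 s + s * deriv q2 s := fun s =>
    (d2 s).unique (deriv_mul_id q2d e2 s)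
  have q10 : q1 0 = T.1 := by have := f1 0; simp at this; exact this.symm
  have q20 : q2 0 = T.2 := by have := f2 0; simp at this; exact this.symm
  -- second derivatives
  have second : ∀ {q F : ℝ → ℝ} {c : ℝ}, ContDiff ℝ (⊤ : ℕ∞) q → (∀ s, F s = q s + s * deriv q s) →
      HasDerivAt F c 0 → c = 2 * deriv q 0 := by
    intro q F c hq hF hc
    have a1 := (hq.differentiable hn 0).hasDerivAt
    have a2 := deriv_mul_id ((contDiff_infty_iff_deriv.1 hq).2.differentiable hn)
      (f := fun s => s * deriv q s) (fun s => rfl) 0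
    have a3 := a1.add a2
    have : F = q + fun s => s * deriv q s := funext hF
    rw [this] at hc
    have := hc.unique a3
    rw [this]; ring
  have s1 := second hq1 f1 dd1
  have s2 := second hq2 f2 dd2
  simp only [add_zero, ContinuousLinearMap.coe_fst', ContinuousLinearMap.coe_snd'] at s1 s2
  -- normal component
  have hp : ContDiff ℝ (⊤ : ℕ∞) (fun s => T.2 * q1 s - T.1 * q2 s) := by fun_prop
  obtain ⟨r, hr, er⟩ := hadamard hp (by simp only [q10, q20]; ring)
  have rd := deriv_mul_id (hr.differentiable hn) er 0
  have rd' : HasDerivAt (fun s => T.2 * q1 s - T.1 * q2 s)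
      (T.2 * deriv q1 0 - T.1 * deriv q2 0) 0 :=
    ((q1d 0).hasDerivAt.const_mul _).sub ((q2d 0).hasDerivAt.const_mul _)
  have r0 : 2 * r 0 = -κ := by
    have := rd.unique rd'
    simp only [zero_mul, add_zero] at this
    rw [hκ, curv, dot2, nor, s1, s2, ← hT, this]
    ring
  -- the function `F`
  set F : ℝ → ℝ → ℝ := fun s h => q1 s ^ 2 + q2 s ^ 2 - 2 * h * r s with hF
  have F0 : ∀ h, F 0 h = 1 + h * κ := by
    intro h
    simp only [hF, q10, q20]
    linear_combination hTT - h * r0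
  have hdist : ∀ s h, dot2 (γ t + h • nor γ t - γ (t + s)) (γ t + h • nor γ t - γ (t + s)) =
      h ^ 2 + s ^ 2 * F s h := by
    intro s h
    have a1 : (γ (t + s)).1 = (γ t).1 + s * q1 s := by linarith [e1 s]
    have a2 : (γ (t + s)).2 = (γ t).2 + s * q2 s := by linarith [e2 s]
    have a3 := er s
    simp only [dot2, nor, Prod.fst_add, Prod.snd_add, Prod.fst_sub, Prod.snd_sub, Prod.smul_fst,
      Prod.smul_snd, smul_eq_mul, a1, a2, hF, ← hT]
    linear_combination h ^ 2 * hTT - 2 * h * s * a3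
  set Φ : (ℝ × ℝ) × ℝ → ℝ := fun w => w.2 ^ 2 * F (w.1.1 * w.2) w.1.2 with hΦ
  have hΦs : ContDiff ℝ (⊤ : ℕ∞) Φ := by
    simp only [hΦ, hF]
    fun_prop
  have hΦd : fderiv ℝ Φ ((0, 0), 1) (0, 1) ≠ 0 := by
    have a1 : HasDerivAt (fun v : ℝ => (((0:ℝ), (0:ℝ)), v)) ((0 : ℝ × ℝ), (1:ℝ)) 1 :=
      (hasDerivAt_const _ _).prodMk (hasDerivAt_id _)
    have a2 := (hΦs.differentiable hn ((0, 0), 1)).hasFDerivAt.comp_hasDerivAt (1:ℝ) a1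
    have a3 : Φ ∘ (fun v : ℝ => (((0:ℝ), (0:ℝ)), v)) = fun v => v ^ 2 := by
      funext v
      simp [hΦ, F0]
    rw [a3] at a2
    have a4 := a2.unique (hasDerivAt_pow 2 (1:ℝ))
    rw [a4]; norm_num
  obtain ⟨v, v0, hv⟩ := smooth_implicit hΦs ((0, 0), 1) hΦd
  have hΦ1 : Φ ((0, 0), 1) = 1 := by simp [hΦ, F0]
  simp only [hΦ1] at v0 hv
  have hvpos : ∀ᶠ x in 𝓝 ((0:ℝ), (0:ℝ)), 0 < v x := by
    have := hv.self_of_nhds.2.continuousAt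
    exact this.eventually (lt_mem_nhds (by rw [v0]; norm_num))
  have hkpos : ∀ᶠ x in 𝓝 ((0:ℝ), (0:ℝ)), 0 < 1 + x.2 * κ := by
    have : Continuous (fun x : ℝ × ℝ => 1 + x.2 * κ) := by fun_prop
    exact this.continuousAt.eventually (lt_mem_nhds (by simp))
  obtain ⟨ε, hε, hball⟩ := Metric.eventually_nhds_iff.1 (hv.and (hvpos.and hkpos))
  have hmem : ∀ u h : ℝ, |u| < ε → |h| < ε → dist (u, h) ((0:ℝ), (0:ℝ)) < ε := by
    intro u h hu hh
    rw [Prod.dist_eq]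
    simpa using ⟨hu, hh⟩
  refine ⟨ε, hε, ε, hε, v, ?_, ?_, ?_⟩
  · rintro ⟨u, h⟩ ⟨hu, hh⟩
    exact (hball (hmem u h (abs_lt.2 hu) (abs_lt.2 hh))).1.2.contDiffWithinAt
  · intro h hh
    obtain ⟨⟨b1, -⟩, b2, b3⟩ := hball (hmem 0 h (by simpa using hε) hh)
    refine ⟨b3, ?_⟩
    simp only [hΦ, zero_mul, F0] at b1
    rw [eq_div_iff (Real.sqrt_pos.2 b3).ne']
    have b4 : v (0, h) ^ 2 * Real.sqrt (1 + h * κ) ^ 2 = 1 := by rw [Real.sq_sqrt b3.le]; exact b1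
    rw [← mul_pow] at b4
    exact (pow_eq_one_iff_of_nonneg (by positivity) two_ne_zero).1 b4
  · intro u h hu hh
    obtain ⟨⟨b1, -⟩, -⟩ := hball (hmem u h hu hh)
    simp only [hΦ] at b1
    rw [hdist]
    linear_combination u ^ 2 * b1
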